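/- Let N ≥ 1, 0 < s < 1, η(x) = (1+|x|²)^{-(N+2s)/2}, and let φ ∈ C_c^∞(ℝ) satisfy φ(t) = 1 for |t| ≤ 1 and φ(t) = 0 for |t| > 2; for R ≥ 1 set φ_R(x) = φ(|x|/R). Then there exists a constant C > 0, depending only on N, s and φ but not on R, such that |(-Δ)^s(η φ_R)(x)| ≤ C (1 + R^{-2s}) η(x) for all x ∈ ℝ^N and all R ≥ 1. -/

import Mathlib

/-!
Write `k = N + 2s` and `u = η φ_R`. The symmetrised quotient
`(2u(x) - u(x+h) - u(x-h)) / |h|^k` is shown to be at most, uniformly in `R ≥ 1`,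
`A η(x) (min(|h|²,1)|h|^{-k} + η(x+h) + η(x-h))`, whose `h`-integral is `C η(x)`
(`symm_quotient_bound`). Its integrability makes the principal value exist and equal half its
integral (`hasFracLapAt_of_symm`), and the estimate follows with room to spare: the bound obtained
is `C η(x)`.

For the pointwise bound put `r = √(1+|x|²)/2`, so that `r^{-k} = 2^k η(x)`.
* If `|h| ≥ r`, then `|h|^{-k} ≤ 2^k η(x)`, and `|u| ≤ K η` is enough.
* If `|h| ≤ r`, then `1 + |y|² ≥ r²` on the segment from `x-h` to `x+h`, where the second derivative
  of `u` in direction `h` is at most a constant times `(1+|y|²)^{-k/2-1}|h|²`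
  (`radial_second_diff`). This needs derivative bounds on `η φ_R` that do not depend on `R`, and
  they come from one-variable calculus: `η φ_R` is a function of `q = |y|²`, and each derivative of
  the cutoff costs `R^{-2}`, which is at most `5/(1+q)` on its support (`radial_profile`).
-/


open MeasureTheory Filter Set

noncomputable section

/-- Euclidean space `ℝ^N`. -/
abbrev ES (N : ℕ) := EuclideanSpace ℝ (Fin N)

/-- The normalization constant `c_{N,s}` of the fractional Laplacian. -/
def fracC (N : ℕ) (s : ℝ) : ℝ :=
  2 ^ (2 * s) * s * Real.Gamma ((N : ℝ) / 2 + s) /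
    (Real.pi ^ ((N : ℝ) / 2) * Real.Gamma (1 - s))

/-- `HasFracLapAt N s u x v` means that the principal-value limit defining
`(-Δ)^s u (x)` exists and equals `v`:
`(-Δ)^s u (x) = c_{N,s} lim_{ε→0⁺} ∫_{ℝ^N ∖ B(x,ε)} (u x - u ξ)/|x-ξ|^{N+2s} dξ`. -/
def HasFracLapAt (N : ℕ) (s : ℝ) (u : ES N → ℝ) (x : ES N) (v : ℝ) : Prop :=
  Filter.Tendsto
    (fun ε : ℝ => fracC N s *
      ∫ ξ in {ξ : ES N | ε < ‖x - ξ‖}, (u x - u ξ) / ‖x - ξ‖ ^ ((N : ℝ) + 2 * s))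
    (nhdsWithin 0 (Set.Ioi 0)) (nhds v)

/-- The weight function `η(x) = (1+|x|²)^{-(N+2s)/2}`. -/
def fracEta (N : ℕ) (s : ℝ) (x : ES N) : ℝ :=
  (1 + ‖x‖ ^ 2) ^ (-(((N : ℝ) + 2 * s) / 2))

/-- `ρ_m(x) = (1+|x|²)^{-m/2}`. -/
def fracRho (N : ℕ) (m : ℝ) (x : ES N) : ℝ :=
  (1 + ‖x‖ ^ 2) ^ (-(m / 2))

/-- Membership in `L_s(ℝ^N)`: locally integrable with
`∫ |u(x)|/(1+|x|)^{N+2s} dx < ∞`. -/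
def MemLs (N : ℕ) (s : ℝ) (u : ES N → ℝ) : Prop :=
  MeasureTheory.LocallyIntegrable u volume ∧
    MeasureTheory.Integrable
      (fun x : ES N => |u x| / (1 + ‖x‖) ^ ((N : ℝ) + 2 * s)) volume

/-- Membership in the Hölder space `C^β(ℝ^N)` for `0 < β < 2`:
Hölder continuity of exponent `β` if `β ≤ 1`, and a Hölder continuous
derivative of exponent `β - 1` if `β > 1`. -/
def MemCHolder {N : ℕ} (β : ℝ) (u : ES N → ℝ) : Prop :=
  (β ≤ 1 → ∃ C : NNReal, HolderWith C β.toNNReal u) ∧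
  (1 < β → Differentiable ℝ u ∧
    ∃ C : NNReal, HolderWith C (β - 1).toNNReal (fderiv ℝ u))

/-- A solution of `(-Δ)^s u = e^u` on `ℝ^N`: a function
`u ∈ C^{2σ}(ℝ^N) ∩ L_s(ℝ^N)` for some `σ > s` satisfying the equation
pointwise. -/
def IsSolution (N : ℕ) (s : ℝ) (u : ES N → ℝ) : Prop :=
  (∃ σ : ℝ, s < σ ∧ MemCHolder (2 * σ) u) ∧ MemLs N s u ∧
    ∀ x : ES N, HasFracLapAt N s u x (Real.exp (u x))

/-- Stability: `∫ e^u φ² ≤ (c_{N,s}/2) ∬ (φ(x)-φ(y))²/|x-y|^{N+2s}` for all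
`φ ∈ C¹_c(ℝ^N)`. -/
def IsStable (N : ℕ) (s : ℝ) (u : ES N → ℝ) : Prop :=
  ∀ φ : ES N → ℝ, ContDiff ℝ 1 φ → HasCompactSupport φ →
    ∫ x : ES N, Real.exp (u x) * φ x ^ 2 ≤
      fracC N s / 2 *
        ∫ x : ES N, ∫ y : ES N, (φ x - φ y) ^ 2 / ‖x - y‖ ^ ((N : ℝ) + 2 * s)

/-- Surface area `|S^{N-1}| = 2 π^{N/2} / Γ(N/2)` of the unit sphere in `ℝ^N`. -/
def sphArea (N : ℕ) : ℝ :=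
  2 * Real.pi ^ ((N : ℝ) / 2) / Real.Gamma ((N : ℝ) / 2)

/-- The normalization constant `p(N,s)` of the Poisson kernel. -/
def poissonC (N : ℕ) (s : ℝ) : ℝ :=
  Real.Gamma (((N : ℝ) + 2 * s) / 2) / (Real.pi ^ ((N : ℝ) / 2) * Real.Gamma s)

/-- The Poisson kernel `P_s(x,t) = p(N,s) t^{2s} / (|x|²+t²)^{(N+2s)/2}`. -/
def poissonKer (N : ℕ) (s : ℝ) (x : ES N) (t : ℝ) : ℝ :=
  poissonC N s * t ^ (2 * s) / (‖x‖ ^ 2 + t ^ 2) ^ (((N : ℝ) + 2 * s) / 2)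

/-- The Caffarelli–Silvestre extension `U(x,t) = ∫ P_s(x-z,t) u(z) dz`. -/
def csExtension (N : ℕ) (s : ℝ) (u : ES N → ℝ) (x : ES N) (t : ℝ) : ℝ :=
  ∫ z : ES N, poissonKer N s (x - z) t * u z

/-- `ζ(x,t) = (1+|x|²+t²)^{-(N+2s)/4}`. -/
def csZeta (N : ℕ) (s : ℝ) (x : ES N) (t : ℝ) : ℝ :=
  (1 + ‖x‖ ^ 2 + t ^ 2) ^ (-(((N : ℝ) + 2 * s) / 4))

/-- The squared (full) gradient `|∇F|²(x,t) = |∇_x F|² + |∂_t F|²` of a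
function `F` on `ℝ^N × ℝ`. -/
def gradSqr (N : ℕ) (F : ES N → ℝ → ℝ) (x : ES N) (t : ℝ) : ℝ :=
  ‖fderiv ℝ (fun y => F y t) x‖ ^ 2 + (deriv (F x) t) ^ 2

/-! ### Radial profile of `η φ_R` -/

/-- The profile `p ↦ φ(√p)` of the radial cutoff, as a function of `p = |x|²`, is `C²` on the whole
line, because `φ = 1` near `0`; its first two derivatives are bounded and vanish for `p > 4`. -/
lemma cutoff_profile (φ : ℝ → ℝ) (hφ : ContDiff ℝ (⊤ : ℕ∞) φ)
    (hφ1 : ∀ t : ℝ, |t| ≤ 1 → φ t = 1) (hφ0 : ∀ t : ℝ, 2 < |t| → φ t = 0) :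
    ∃ (ψ ψ₁ ψ₂ : ℝ → ℝ) (M : ℝ), 0 < M ∧ (∀ p, HasDerivAt ψ (ψ₁ p) p) ∧
      (∀ p, HasDerivAt ψ₁ (ψ₂ p) p) ∧
      (∀ p, 0 ≤ p → |ψ p| ≤ M ∧ |ψ₁ p| ≤ M ∧ |ψ₂ p| ≤ M) ∧
      (∀ p, 4 < p → ψ₁ p = 0 ∧ ψ₂ p = 0) ∧ ∀ r, 0 ≤ r → φ r = ψ (r ^ 2) := by
  have hψ : ContDiff ℝ 2 (fun p => φ (Real.sqrt p)) := by
    rw [contDiff_iff_contDiffAt]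
    intro p
    rcases lt_or_ge p 1 with hp | hp
    · have : (fun p => φ (Real.sqrt p)) =ᶠ[nhds p] fun _ => 1 := by
        filter_upwards [Iio_mem_nhds hp] with q hq
        apply hφ1
        rw [abs_of_nonneg (Real.sqrt_nonneg q)]
        exact Real.sqrt_le_one.mpr (le_of_lt hq)
      exact contDiffAt_const.congr_of_eventuallyEq this
    · have h1 : ContDiff ℝ 2 φ := contDiff_infty.1 hφ 2
      exact h1.contDiffAt.comp p (Real.contDiffAt_sqrt (by linarith))
  set ψ : ℝ → ℝ := fun p => φ (Real.sqrt p) with hψd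
  have hz : ∀ p, 4 < p → ψ p = 0 := by
    intro p hp
    apply hφ0
    rw [abs_of_nonneg (Real.sqrt_nonneg p)]
    exact Real.lt_sqrt_of_sq_lt (by linarith)
  have hz1 : ∀ p, 4 < p → deriv ψ p = 0 := by
    intro p hp
    have : ψ =ᶠ[nhds p] fun _ => 0 := by
      filter_upwards [Ioi_mem_nhds hp] with q hq using hz q hq
    rw [this.deriv_eq]; simp
  have hz2 : ∀ p, 4 < p → deriv (deriv ψ) p = 0 := by
    intro p hp
    have : deriv ψ =ᶠ[nhds p] fun _ => 0 := by
      filter_upwards [Ioi_mem_nhds hp] with q hq using hz1 q hq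
    rw [this.deriv_eq]; simp
  have hd1 : ContDiff ℝ 1 (deriv ψ) :=
    ((contDiff_succ_iff_deriv (n := 1)).1 (by rw [one_add_one_eq_two]; exact hψ)).2.2
  have hd2 : Continuous (deriv (deriv ψ)) := hd1.continuous_deriv le_rfl
  have key : ∀ f : ℝ → ℝ, Continuous f → (∀ p, 4 < p → f p = 0) →
      ∃ M, 0 ≤ M ∧ ∀ p, 0 ≤ p → |f p| ≤ M := by
    intro f hf hf0
    obtain ⟨M, hM⟩ := (isCompact_Icc (a := (0 : ℝ)) (b := 4)).exists_bound_of_continuousOn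
      hf.continuousOn
    have hM0 : 0 ≤ M := (norm_nonneg _).trans (hM 0 (by norm_num))
    refine ⟨M, hM0, fun p hp => ?_⟩
    rcases le_or_gt p 4 with h | h
    · exact hM p ⟨hp, h⟩
    · rw [hf0 p h]; simpa using hM0
  obtain ⟨M0, h00, h0⟩ := key ψ hψ.continuous hz
  obtain ⟨M1, h10, h1⟩ := key _ hd1.continuous hz1
  obtain ⟨M2, h20, h2⟩ := key _ hd2 hz2
  refine ⟨ψ, deriv ψ, deriv (deriv ψ), M0 + M1 + M2 + 1, by positivity,
    fun p => (hψ.differentiable (by norm_num) p).hasDerivAt,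
    fun p => (hd1.differentiable (by norm_num) p).hasDerivAt, fun p hp => ?_,
    fun p hp => ⟨hz1 p hp, hz2 p hp⟩, fun r hr => ?_⟩
  · have := h0 p hp
    have := h1 p hp
    have := h2 p hp
    refine ⟨?_, ?_, ?_⟩ <;> linarith
  · simp only [hψd, Real.sqrt_sq hr]

/-- `η φ_R` is a function `G` of `q = |x|²`, and `G` and its first two derivatives obey the decay
estimates of `(1+q)^{-a}` with a constant independent of `R ≥ 1`. The derivatives of the cutoff
factor are supported where `1 + q ≤ 5R²`, so every factor `R^{-2}` gains a factor `(1+q)^{-1}`. -/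
lemma radial_profile (φ : ℝ → ℝ) (hφ : ContDiff ℝ (⊤ : ℕ∞) φ)
    (hφ1 : ∀ t : ℝ, |t| ≤ 1 → φ t = 1) (hφ0 : ∀ t : ℝ, 2 < |t| → φ t = 0)
    (a : ℝ) (ha : 0 < a) :
    ∃ K : ℝ, 0 < K ∧ ∀ R : ℝ, 1 ≤ R → ∃ G G₁ G₂ : ℝ → ℝ,
      (∀ r, 0 ≤ r → (1 + r ^ 2) ^ (-a) * φ (r / R) = G (r ^ 2)) ∧
      (∀ q, 0 ≤ q → HasDerivAt G (G₁ q) q) ∧ (∀ q, 0 ≤ q → HasDerivAt G₁ (G₂ q) q) ∧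
      (∀ q, 0 ≤ q → |G q| ≤ K * (1 + q) ^ (-a)) ∧
      (∀ q, 0 ≤ q → |G₁ q| ≤ K * ((1 + q) ^ (-a) / (1 + q))) ∧
      (∀ q, 0 ≤ q → |G₂ q| ≤ K * ((1 + q) ^ (-a) / (1 + q) ^ 2)) := by
  obtain ⟨ψ, ψ₁, ψ₂, M, hM, hd1, hd2, hb, hz, heq⟩ := cutoff_profile φ hφ hφ1 hφ0
  refine ⟨M * (a * (a + 1) + 10 * a + 25 + a + 5 + 1), by positivity, fun R hR => ?_⟩
  have hR0 : 0 < R := by linarith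
  have hA : ∀ b q : ℝ, 0 ≤ q →
      HasDerivAt (fun q => (1 + q) ^ (-b)) (-b * ((1 + q) ^ (-b) / (1 + q))) q := by
    intro b q hq
    have h : HasDerivAt (fun q => (1 + q) ^ (-b)) (1 * -b * (1 + q) ^ (-b - 1)) q :=
      ((hasDerivAt_id q).const_add 1).rpow_const (p := -b)
        (Or.inl (by simp only [id]; positivity))
    convert h using 1
    rw [Real.rpow_sub_one (by positivity)]
    ring
  have hA1 : ∀ q : ℝ, 0 ≤ q →
      HasDerivAt (fun q => -a * ((1 + q) ^ (-a) / (1 + q)))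
        (a * (a + 1) * ((1 + q) ^ (-a) / (1 + q) ^ 2)) q := by
    intro q hq
    have hq1 : (1 + q) ≠ 0 := by positivity
    have h : HasDerivAt (fun q => -a * ((1 + q) ^ (-a) / (1 + q)))
        (-a * ((-a * ((1 + q) ^ (-a) / (1 + q)) * (1 + q) - (1 + q) ^ (-a) * 1) / (1 + q) ^ 2)) q :=
      ((hA a q hq).div ((hasDerivAt_id q).const_add 1) hq1).const_mul (-a)
    convert h using 1
    field_simp
    ring
  have hB : ∀ q, HasDerivAt (fun q => ψ (q / R ^ 2)) (ψ₁ (q / R ^ 2) / R ^ 2) q := by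
    intro q
    have h : HasDerivAt (fun q => ψ (q / R ^ 2)) (ψ₁ (q / R ^ 2) * (1 / R ^ 2)) q :=
      (hd1 (q / R ^ 2)).comp q ((hasDerivAt_id q).div_const (R ^ 2))
    convert h using 1
    ring
  have hB1 : ∀ q, HasDerivAt (fun q => ψ₁ (q / R ^ 2) / R ^ 2) (ψ₂ (q / R ^ 2) / R ^ 4) q := by
    intro q
    have h : HasDerivAt (fun q => ψ₁ (q / R ^ 2) / R ^ 2)
        (ψ₂ (q / R ^ 2) * (1 / R ^ 2) / R ^ 2) q :=
      ((hd2 (q / R ^ 2)).comp q ((hasDerivAt_id q).div_const (R ^ 2))).div_const (R ^ 2)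
    convert h using 1
    field_simp
  have hBb : ∀ q, 0 ≤ q → |ψ₁ (q / R ^ 2) / R ^ 2| ≤ 5 * M * (1 / (1 + q)) ∧
      |ψ₂ (q / R ^ 2) / R ^ 4| ≤ 25 * M * (1 / (1 + q) ^ 2) := by
    intro q hq
    have hp : 0 ≤ q / R ^ 2 := by positivity
    rcases lt_or_ge 4 (q / R ^ 2) with h | h
    · rw [(hz _ h).1, (hz _ h).2]
      simp only [zero_div, abs_zero]
      constructor <;> positivity
    · rw [div_le_iff₀ (by positivity)] at h
      have h5 : 1 + q ≤ 5 * R ^ 2 := by nlinarith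
      have hi : 1 / R ^ 2 ≤ 5 * (1 / (1 + q)) := by
        rw [mul_one_div, div_le_div_iff₀ (by positivity) (by positivity)]; linarith
      obtain ⟨-, b1, b2⟩ := hb _ hp
      have hi2 : 1 / R ^ 4 ≤ 25 * (1 / (1 + q) ^ 2) := by
        calc 1 / R ^ 4 = (1 / R ^ 2) ^ 2 := by field_simp
          _ ≤ (5 * (1 / (1 + q))) ^ 2 := by gcongr
          _ = _ := by field_simp; norm_num
      constructor
      · rw [abs_div, abs_of_pos (by positivity : 0 < R ^ 2), div_eq_mul_one_div]
        calc _ ≤ M * (5 * (1 / (1 + q))) := by gcongr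
          _ = _ := by ring
      · rw [abs_div, abs_of_pos (by positivity : 0 < R ^ 4), div_eq_mul_one_div]
        calc _ ≤ M * (25 * (1 / (1 + q) ^ 2)) := by gcongr
          _ = _ := by ring
  refine ⟨fun q => (1 + q) ^ (-a) * ψ (q / R ^ 2),
    fun q => -a * ((1 + q) ^ (-a) / (1 + q)) * ψ (q / R ^ 2) +
      (1 + q) ^ (-a) * (ψ₁ (q / R ^ 2) / R ^ 2),
    fun q => (a * (a + 1) * ((1 + q) ^ (-a) / (1 + q) ^ 2) * ψ (q / R ^ 2) +
        -a * ((1 + q) ^ (-a) / (1 + q)) * (ψ₁ (q / R ^ 2) / R ^ 2)) +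
      (-a * ((1 + q) ^ (-a) / (1 + q)) * (ψ₁ (q / R ^ 2) / R ^ 2) +
        (1 + q) ^ (-a) * (ψ₂ (q / R ^ 2) / R ^ 4)), ?_, ?_, ?_, ?_, ?_, ?_⟩
  · intro r hr
    rw [heq (r / R) (by positivity), div_pow]
  · intro q hq
    exact (hA a q hq).mul (hB q)
  · intro q hq
    exact ((hA1 q hq).mul (hB q)).add ((hA a q hq).mul (hB1 q))
  all_goals
    intro q hq
    have hq1 : 0 < 1 + q := by positivity
    have hE : 0 < (1 + q) ^ (-a) := Real.rpow_pos_of_pos hq1 _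
    obtain ⟨c1, c2⟩ := hBb q hq
    have c0 := (hb (q / R ^ 2) (by positivity)).1
    set E := (1 + q) ^ (-a)
    set b0 := ψ (q / R ^ 2)
    set b1 := ψ₁ (q / R ^ 2) / R ^ 2
    set b2 := ψ₂ (q / R ^ 2) / R ^ 4
  · rw [abs_mul, abs_of_pos hE]
    calc E * |b0| ≤ E * M := by gcongr
      _ = M * 1 * E := by ring
      _ ≤ _ := mul_le_mul_of_nonneg_right
          (mul_le_mul_of_nonneg_left (by nlinarith) hM.le) (by positivity)
  · calc |-a * (E / (1 + q)) * b0 + E * b1|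
        ≤ |-a * (E / (1 + q)) * b0| + |E * b1| := abs_add_le _ _
      _ = a * (E / (1 + q)) * |b0| + E * |b1| := by
          rw [abs_mul, abs_mul, abs_mul, abs_neg, abs_of_pos ha, abs_of_pos hE,
            abs_of_pos (div_pos hE hq1)]
      _ ≤ a * (E / (1 + q)) * M + E * (5 * M * (1 / (1 + q))) := by gcongr
      _ = M * (a + 5) * (E / (1 + q)) := by ring
      _ ≤ _ := mul_le_mul_of_nonneg_right
          (mul_le_mul_of_nonneg_left (by nlinarith) hM.le) (by positivity)
  · calc |(a * (a + 1) * (E / (1 + q) ^ 2) * b0 + -a * (E / (1 + q)) * b1) +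
          (-a * (E / (1 + q)) * b1 + E * b2)|
        ≤ (|a * (a + 1) * (E / (1 + q) ^ 2) * b0| + |-a * (E / (1 + q)) * b1|) +
          (|-a * (E / (1 + q)) * b1| + |E * b2|) :=
          (abs_add_le _ _).trans (add_le_add (abs_add_le _ _) (abs_add_le _ _))
      _ = (a * (a + 1) * (E / (1 + q) ^ 2) * |b0| + a * (E / (1 + q)) * |b1|) +
          (a * (E / (1 + q)) * |b1| + E * |b2|) := by
          rw [abs_mul _ b0, abs_mul _ b1, abs_mul _ b2, abs_of_pos hE, neg_mul, abs_neg,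
            abs_of_pos (by positivity : 0 < a * (E / (1 + q))),
            abs_of_pos (by positivity : 0 < a * (a + 1) * (E / (1 + q) ^ 2))]
      _ ≤ (a * (a + 1) * (E / (1 + q) ^ 2) * M + a * (E / (1 + q)) * (5 * M * (1 / (1 + q)))) +
          (a * (E / (1 + q)) * (5 * M * (1 / (1 + q))) + E * (25 * M * (1 / (1 + q) ^ 2))) := by
          gcongr
      _ = M * (a * (a + 1) + 10 * a + 25) * (E / (1 + q) ^ 2) := by field_simp; ring
      _ ≤ _ := mul_le_mul_of_nonneg_right
          (mul_le_mul_of_nonneg_left (by nlinarith) hM.le) (by positivity)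

/-! ### Second differences -/

/-- A second difference is controlled by a bound on the second derivative. -/
lemma abs_second_diff_le (g g₁ g₂ : ℝ → ℝ) (B : ℝ) (h1 : ∀ t, HasDerivAt g (g₁ t) t)
    (h2 : ∀ t, HasDerivAt g₁ (g₂ t) t) (hB : ∀ t ∈ Icc (-1 : ℝ) 1, |g₂ t| ≤ B) :
    |2 * g 0 - g 1 - g (-1)| ≤ 2 * B := by
  have hB0 : 0 ≤ B := (abs_nonneg _).trans (hB 0 (by norm_num))
  have hg1 : ∀ t ∈ Icc (0 : ℝ) 1, |g₁ t - g₁ (-t)| ≤ 2 * B := by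
    intro t ht
    have := (convex_Icc (-1 : ℝ) 1).norm_image_sub_le_of_norm_hasDerivWithin_le
      (f := g₁) (f' := g₂) (C := B) (fun y _ => (h2 y).hasDerivWithinAt) hB
      (x := -t) (y := t) ⟨by linarith [ht.2], by linarith [ht.1]⟩
      ⟨by linarith [ht.1], ht.2⟩
    rw [Real.norm_eq_abs, Real.norm_eq_abs, abs_of_nonneg (by linarith [ht.1] : 0 ≤ t - -t)] at this
    nlinarith [ht.2]
  have hw : ∀ t, HasDerivAt (fun t => g t + g (-t)) (g₁ t - g₁ (-t)) t := by
    intro t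
    have h : HasDerivAt (fun t => g t + g (-t)) (g₁ t + g₁ (-t) * -1) t :=
      (h1 t).add ((h1 (-t)).comp t (hasDerivAt_neg t))
    convert h using 1
    ring
  have := (convex_Icc (0 : ℝ) 1).norm_image_sub_le_of_norm_hasDerivWithin_le
      (f := fun t => g t + g (-t)) (C := 2 * B) (fun y _ => (hw y).hasDerivWithinAt) hg1
      (x := 0) (y := 1) (by norm_num) (by norm_num)
  simp only [Real.norm_eq_abs, neg_zero, sub_zero, abs_one, mul_one] at this
  rw [abs_sub_comm] at this
  convert this using 2
  ring

/-- Second differences of a radial function `G(|x|²)`: along the segment, with `q = |x+th|²`, the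
second derivative is `4⟨x+th,h⟩² G''(q) + 2|h|² G'(q)`, and Cauchy–Schwarz bounds the square
by `q|h|²`. -/
lemma radial_second_diff {E : Type*} [NormedAddCommGroup E] [InnerProductSpace ℝ E]
    (G G₁ G₂ : ℝ → ℝ) (K a : ℝ) (ha : 0 < a) (hK : 0 < K)
    (h1 : ∀ q, 0 ≤ q → HasDerivAt G (G₁ q) q) (h2 : ∀ q, 0 ≤ q → HasDerivAt G₁ (G₂ q) q)
    (b1 : ∀ q, 0 ≤ q → |G₁ q| ≤ K * ((1 + q) ^ (-a) / (1 + q)))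
    (b2 : ∀ q, 0 ≤ q → |G₂ q| ≤ K * ((1 + q) ^ (-a) / (1 + q) ^ 2))
    (x h : E) (D : ℝ) (hD : 0 < D) (hxD : ∀ t ∈ Icc (-1 : ℝ) 1, D ≤ 1 + ‖x + t • h‖ ^ 2) :
    |2 * G (‖x‖ ^ 2) - G (‖x + h‖ ^ 2) - G (‖x - h‖ ^ 2)| ≤
      12 * K * (D ^ (-a) / D) * ‖h‖ ^ 2 := by
  set q : ℝ → ℝ := fun t => ‖x + t • h‖ ^ 2 with hq
  set q₁ : ℝ → ℝ := fun t => 2 * inner ℝ (x + t • h) h with hq1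
  have hq0 : ∀ t, 0 ≤ q t := fun t => by positivity
  have dl : ∀ t, HasDerivAt (fun t : ℝ => x + t • h) h t := by
    intro t
    simpa using ((hasDerivAt_id t).smul_const h).const_add x
  have dq : ∀ t, HasDerivAt q (q₁ t) t := fun t => (dl t).norm_sq
  have dq1 : ∀ t, HasDerivAt q₁ (2 * ‖h‖ ^ 2) t := by
    intro t
    have := ((dl t).inner ℝ (hasDerivAt_const t h)).const_mul 2
    simpa [real_inner_self_eq_norm_sq] using this
  have d1 : ∀ t, HasDerivAt (fun t => G (q t)) (G₁ (q t) * q₁ t) t :=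
    fun t => (h1 _ (hq0 t)).comp t (dq t)
  have d2 : ∀ t, HasDerivAt (fun t => G₁ (q t) * q₁ t)
      (G₂ (q t) * q₁ t * q₁ t + G₁ (q t) * (2 * ‖h‖ ^ 2)) t :=
    fun t => ((h2 _ (hq0 t)).comp t (dq t)).mul (dq1 t)
  have main := abs_second_diff_le _ _ _ (6 * K * (D ^ (-a) / D) * ‖h‖ ^ 2) d1 d2 ?_
  · simp only [hq, zero_smul, add_zero, one_smul, neg_smul, ← sub_eq_add_neg] at main
    calc _ ≤ _ := main
      _ = _ := by ring
  · intro t ht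
    have hcs : q₁ t * q₁ t ≤ 4 * q t * ‖h‖ ^ 2 := by
      have := real_inner_mul_inner_self_le (x + t • h) h
      simp only [real_inner_self_eq_norm_sq] at this
      simp only [hq, hq1]
      nlinarith
    have hqp : 0 < 1 + q t := by linarith [hq0 t]
    have hE : 0 < (1 + q t) ^ (-a) := Real.rpow_pos_of_pos hqp _
    have hED : (1 + q t) ^ (-a) / (1 + q t) ≤ D ^ (-a) / D := by
      have hDq := hxD t ht
      have := Real.rpow_le_rpow_of_nonpos hD hDq (by linarith : -a ≤ 0)
      gcongr
    calc |G₂ (q t) * q₁ t * q₁ t + G₁ (q t) * (2 * ‖h‖ ^ 2)|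
        ≤ |G₂ (q t)| * (q₁ t * q₁ t) + |G₁ (q t)| * (2 * ‖h‖ ^ 2) := by
          refine (abs_add_le _ _).trans ?_
          rw [mul_assoc, abs_mul, abs_mul (G₁ (q t)), abs_of_nonneg (mul_self_nonneg (q₁ t)),
            abs_of_nonneg (by positivity : 0 ≤ 2 * ‖h‖ ^ 2)]
      _ ≤ K * ((1 + q t) ^ (-a) / (1 + q t) ^ 2) * (4 * (1 + q t) * ‖h‖ ^ 2) +
          K * ((1 + q t) ^ (-a) / (1 + q t)) * (2 * ‖h‖ ^ 2) := by
          refine add_le_add (mul_le_mul (b2 _ (hq0 t)) (hcs.trans ?_) (mul_self_nonneg _)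
            (by positivity)) (mul_le_mul_of_nonneg_right (b1 _ (hq0 t)) (by positivity))
          gcongr
          linarith
      _ = 6 * K * ((1 + q t) ^ (-a) / (1 + q t)) * ‖h‖ ^ 2 := by field_simp; ring
      _ ≤ _ := by gcongr

/-! ### Integrable majorants -/

/-- The Lévy-type weight `min(|z|²,1)|z|^{-(N+2s)}` dominating second-difference quotients. -/
def levyW (N : ℕ) (s : ℝ) (z : ES N) : ℝ :=
  min (‖z‖ ^ 2) 1 * ‖z‖ ^ (-((N : ℝ) + 2 * s))

lemma levyW_nonneg (N : ℕ) (s : ℝ) (z : ES N) : 0 ≤ levyW N s z := by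
  unfold levyW; positivity

/-- In polar coordinates the weight is `r^{1-2s}` on `(0,1]` and `r^{-1-2s}` on `(1,∞)`. -/
lemma integrable_levyW (N : ℕ) (hN : 1 ≤ N) (s : ℝ) (hs0 : 0 < s) (hs1 : s < 1) :
    Integrable (levyW N s) := by
  have : Nonempty (Fin N) := ⟨⟨0, hN⟩⟩
  have key := integrable_fun_norm_addHaar (E := ES N) volume
    (f := fun r : ℝ => min (r ^ 2) 1 * r ^ (-((N : ℝ) + 2 * s)))
  refine key.2 ?_
  rw [finrank_euclideanSpace_fin, ← Ioc_union_Ioi_eq_Ioi (zero_le_one' ℝ)]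
  have hpow : ∀ y : ℝ, 0 < y → y ^ (N - 1) = y ^ ((N : ℝ) - 1) := by
    intro y hy
    rw [← Real.rpow_natCast, Nat.cast_sub hN, Nat.cast_one]
  refine IntegrableOn.union ?_ ?_
  · have h : IntegrableOn (fun y : ℝ => y ^ (1 - 2 * s)) (Ioc 0 1) := by
      rw [← intervalIntegrable_iff_integrableOn_Ioc_of_le zero_le_one]
      exact intervalIntegral.intervalIntegrable_rpow' (by linarith)
    refine h.congr_fun (fun y hy => ?_) measurableSet_Ioc
    have hy0 : 0 < y := hy.1
    simp only [smul_eq_mul]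
    rw [min_eq_left (by nlinarith [hy.2, hy0]), hpow y hy0, ← Real.rpow_two,
      ← Real.rpow_add hy0, ← Real.rpow_add hy0]
    congr 1; ring
  · have h : IntegrableOn (fun y : ℝ => y ^ (-1 - 2 * s)) (Ioi 1) :=
      integrableOn_Ioi_rpow_of_lt (by linarith) one_pos
    refine h.congr_fun (fun y hy => ?_) measurableSet_Ioi
    have hy1 : 1 < y := hy
    have hy0 : 0 < y := by linarith
    simp only [smul_eq_mul]
    rw [min_eq_right (by nlinarith), hpow y hy0, one_mul, ← Real.rpow_add hy0]
    congr 1; ring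

lemma fracEta_pos (N : ℕ) (s : ℝ) (x : ES N) : 0 < fracEta N s x :=
  Real.rpow_pos_of_pos (by positivity) _

lemma integrable_fracEta (N : ℕ) (s : ℝ) (hs0 : 0 < s) : Integrable (fracEta N s) := by
  have := integrable_rpow_neg_one_add_norm_sq (E := ES N) (μ := volume) (r := (N : ℝ) + 2 * s)
    (by rw [finrank_euclideanSpace_fin]; linarith)
  refine this.congr (ae_of_all _ fun x => ?_)
  simp only [fracEta]
  congr 1; ring

/-! ### Principal value -/

/-- If the symmetrised difference quotient is integrable, the principal value exists and equals
half its integral: over `{|h| > ε}` the substitution `h ↦ -h` symmetrises the integrand, and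
`ε → 0` is dominated convergence. -/
lemma hasFracLapAt_of_symm (N : ℕ) (hN : 1 ≤ N) (s : ℝ) (hs0 : 0 < s) (hs1 : s < 1)
    (u : ES N → ℝ) (hu : Continuous u) (L : ℝ) (hL : ∀ y, |u y| ≤ L) (x : ES N)
    (hS : Integrable (fun h : ES N =>
      (2 * u x - u (x + h) - u (x - h)) / ‖h‖ ^ ((N : ℝ) + 2 * s))) :
    HasFracLapAt N s u x (fracC N s * (1 / 2 * ∫ h : ES N,
      (2 * u x - u (x + h) - u (x - h)) / ‖h‖ ^ ((N : ℝ) + 2 * s))) := by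
  set k : ℝ := (N : ℝ) + 2 * s with hk
  set S : ES N → ℝ := fun h => (2 * u x - u (x + h) - u (x - h)) / ‖h‖ ^ k with hSd
  have hL0 : 0 ≤ L := (abs_nonneg _).trans (hL x)
  have hms : ∀ ε : ℝ, MeasurableSet {h : ES N | ε < ‖h‖} := fun ε =>
    measurableSet_lt measurable_const measurable_norm
  have hT : ∀ ε : ℝ, 0 < ε → ∀ v : ES N → ES N, Continuous v →
      Integrable ({h : ES N | ε < ‖h‖}.indicator fun h => (u x - u (v h)) / ‖h‖ ^ k) := by
    intro ε hε v hv
    refine ((integrable_levyW N hN s hs0 hs1).const_mul (2 * L * (1 + 1 / ε ^ 2))).mono' ?_ ?_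
    · refine (Measurable.aestronglyMeasurable ?_).indicator (hms ε)
      have : Measurable (fun h => u (v h)) := (hu.comp hv).measurable
      exact (measurable_const.sub this).div (measurable_norm.pow_const k)
    · refine ae_of_all _ fun h => ?_
      by_cases hh : h ∈ {h : ES N | ε < ‖h‖}
      · rw [indicator_of_mem hh]
        have hh' : ε < ‖h‖ := hh
        have hp : 0 < ‖h‖ := hε.trans hh'
        have hkp : 0 < ‖h‖ ^ (-k) := Real.rpow_pos_of_pos hp _
        have e1 : |u x - u (v h)| ≤ 2 * L := by
          have := abs_sub (u x) (u (v h)); linarith [hL x, hL (v h)]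
        have e2 : 1 ≤ (1 + 1 / ε ^ 2) * min (‖h‖ ^ 2) 1 := by
          rcases le_total (‖h‖ ^ 2) 1 with hc | hc
          · rw [min_eq_left hc]
            have : 1 ≤ 1 / ε ^ 2 * ‖h‖ ^ 2 := by
              rw [one_div_mul_eq_div, one_le_div (by positivity)]; gcongr
            nlinarith [sq_nonneg ‖h‖]
          · rw [min_eq_right hc]
            have : 0 < 1 / ε ^ 2 := by positivity
            linarith
        rw [div_eq_mul_inv, ← Real.rpow_neg hp.le, Real.norm_eq_abs, abs_mul, abs_of_pos hkp]
        calc |u x - u (v h)| * ‖h‖ ^ (-k) ≤ 2 * L * ‖h‖ ^ (-k) * 1 := by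
              rw [mul_one]; gcongr
          _ ≤ 2 * L * ‖h‖ ^ (-k) * ((1 + 1 / ε ^ 2) * min (‖h‖ ^ 2) 1) := by gcongr
          _ = _ := by simp only [levyW, hk]; ring
      · rw [indicator_of_notMem hh, norm_zero]
        have := levyW_nonneg N s h
        positivity
  unfold HasFracLapAt
  refine Tendsto.const_mul _ ?_
  have heq : ∀ ε : ℝ, 0 < ε →
      ∫ ξ in {ξ : ES N | ε < ‖x - ξ‖}, (u x - u ξ) / ‖x - ξ‖ ^ k =
        1 / 2 * ∫ h, {h : ES N | ε < ‖h‖}.indicator S h := by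
    intro ε hε
    have hm : MeasurableSet {ξ : ES N | ε < ‖x - ξ‖} :=
      measurableSet_lt measurable_const (measurable_const.sub measurable_id).norm
    rw [← integral_indicator hm]
    set F : ES N → ℝ :=
      {ξ : ES N | ε < ‖x - ξ‖}.indicator fun ξ => (u x - u ξ) / ‖x - ξ‖ ^ k with hF
    have f1 : ∀ h, F (x + h) =
        {h : ES N | ε < ‖h‖}.indicator (fun h => (u x - u (x + h)) / ‖h‖ ^ k) h := by
      intro h
      simp only [hF, indicator, mem_ofPred_eq, sub_add_cancel_left, norm_neg]
    have f2 : ∀ h, F (x - h) =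
        {h : ES N | ε < ‖h‖}.indicator (fun h => (u x - u (x - h)) / ‖h‖ ^ k) h := by
      intro h
      simp only [hF, indicator, mem_ofPred_eq, sub_sub_cancel]
    have i1 : ∫ h, F (x + h) = ∫ ξ, F ξ := integral_add_left_eq_self F x
    have i2 : ∫ h, F (x - h) = ∫ ξ, F ξ := integral_sub_left_eq_self F volume x
    have j1 : Integrable fun h => F (x + h) := by
      simp_rw [f1]; exact hT ε hε (fun h => x + h) (by fun_prop)
    have j2 : Integrable fun h => F (x - h) := by
      simp_rw [f2]; exact hT ε hε (fun h => x - h) (by fun_prop)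
    have i3 : ∫ h, {h : ES N | ε < ‖h‖}.indicator S h = ∫ h, (F (x + h) + F (x - h)) := by
      congr 1
      ext h
      rw [f1, f2, hSd]
      by_cases hh : h ∈ {h : ES N | ε < ‖h‖}
      · simp only [indicator_of_mem hh]; ring
      · simp only [indicator_of_notMem hh]; ring
    rw [i3, integral_add j1 j2, i1, i2]
    ring
  have hlim : Tendsto (fun ε : ℝ => 1 / 2 * ∫ h, {h : ES N | ε < ‖h‖}.indicator S h)
      (nhdsWithin 0 (Ioi 0)) (nhds (1 / 2 * ∫ h, S h)) := by
    refine Tendsto.const_mul _ ?_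
    refine tendsto_integral_filter_of_dominated_convergence (fun h => ‖S h‖) ?_ ?_ hS.norm ?_
    · exact Eventually.of_forall fun ε => hS.aestronglyMeasurable.indicator (hms ε)
    · exact Eventually.of_forall fun ε => ae_of_all _ fun h => norm_indicator_le_norm_self _ _
    · refine ae_of_all _ fun h => ?_
      by_cases h0 : h = 0
      · -- the second difference vanishes at `h = 0`, so the removed ball leaves nothing out
        have hz : S h = 0 := by
          simp only [hSd, h0, add_zero, sub_zero]; ring
        have : ∀ ε : ℝ, {h : ES N | ε < ‖h‖}.indicator S h = 0 := fun ε => by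
          simp only [indicator, hz, ite_self]
        simp only [this, hz]
        exact tendsto_const_nhds
      · have hp : 0 < ‖h‖ := norm_pos_iff.2 h0
        refine tendsto_const_nhds.congr' ?_
        filter_upwards [nhdsWithin_le_nhds (Iio_mem_nhds hp)] with ε hε
        rw [indicator_of_mem (show h ∈ {h : ES N | ε < ‖h‖} from hε)]
  refine hlim.congr' ?_
  filter_upwards [self_mem_nhdsWithin] with ε hε
  exact (heq ε hε).symm

/-! ### Uniform estimate -/

/-- The pointwise bound on the symmetrised quotient. With `r = √(1+|x|²)/2 ≥ 1/2`, so that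
`r^{-(N+2s)} = 2^{N+2s} η(x)`: for `|h| ≤ r` the second-derivative bound is used on a segment where
`1+|y|² ≥ r²`; for `|h| ≥ r` the kernel itself is at most `2^{N+2s} η(x)`. -/
lemma symm_quotient_bound (N : ℕ) (s : ℝ) (hs0 : 0 < s)
    (u : ES N → ℝ) (G G₁ G₂ : ℝ → ℝ) (K : ℝ) (hK : 0 < K)
    (huG : ∀ y, u y = G (‖y‖ ^ 2))
    (h1 : ∀ q, 0 ≤ q → HasDerivAt G (G₁ q) q) (h2 : ∀ q, 0 ≤ q → HasDerivAt G₁ (G₂ q) q)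
    (b0 : ∀ y, |u y| ≤ K * fracEta N s y)
    (b1 : ∀ q, 0 ≤ q → |G₁ q| ≤ K * ((1 + q) ^ (-(((N : ℝ) + 2 * s) / 2)) / (1 + q)))
    (b2 : ∀ q, 0 ≤ q → |G₂ q| ≤ K * ((1 + q) ^ (-(((N : ℝ) + 2 * s) / 2)) / (1 + q) ^ 2))
    (x h : ES N) :
    |(2 * u x - u (x + h) - u (x - h)) / ‖h‖ ^ ((N : ℝ) + 2 * s)| ≤
      48 * K * 2 ^ ((N : ℝ) + 2 * s) * fracEta N s x *
        (levyW N s h + (fracEta N s (x + h) + fracEta N s (x - h))) := by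
  set k : ℝ := (N : ℝ) + 2 * s with hk
  have hkpos : 0 < k := by positivity
  have ηx := fracEta_pos N s x
  have ηp := fracEta_pos N s (x + h)
  have ηm := fracEta_pos N s (x - h)
  have hW := levyW_nonneg N s h
  have h2k : (1 : ℝ) ≤ 2 ^ k := Real.one_le_rpow (by norm_num) hkpos.le
  set r : ℝ := Real.sqrt (1 + ‖x‖ ^ 2) / 2 with hr
  have hr2 : r ^ 2 = (1 + ‖x‖ ^ 2) / 4 := by
    rw [hr, div_pow, Real.sq_sqrt (by positivity)]; norm_num
  have hr0 : 0 < r := by positivity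
  have hr12 : 1 / 4 ≤ r ^ 2 := by rw [hr2]; nlinarith [sq_nonneg ‖x‖]
  have hrk : r ^ (-k) = 2 ^ k * fracEta N s x := by
    have e : r = (1 + ‖x‖ ^ 2) ^ (1 / 2 : ℝ) / 2 := by rw [hr, Real.sqrt_eq_rpow]
    rw [e, Real.div_rpow (by positivity) (by norm_num), ← Real.rpow_mul (by positivity),
      Real.rpow_neg (by norm_num : (0 : ℝ) ≤ 2), div_inv_eq_mul, mul_comm, fracEta, ← hk]
    congr 2; ring
  have hr2k : (r ^ 2) ^ (-(k / 2)) = r ^ (-k) := by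
    rw [← Real.rpow_two, ← Real.rpow_mul hr0.le]; congr 1; ring
  rcases eq_or_ne h 0 with h0 | h0
  · have : 2 * u x - u (x + h) - u (x - h) = 0 := by
      simp only [h0, add_zero, sub_zero]; ring
    rw [this, zero_div, abs_zero]
    positivity
  have hp : 0 < ‖h‖ := norm_pos_iff.2 h0
  have hkp : 0 < ‖h‖ ^ (-k) := Real.rpow_pos_of_pos hp _
  rw [div_eq_mul_inv, ← Real.rpow_neg hp.le, abs_mul, abs_of_pos hkp]
  rcases le_total ‖h‖ r with hc | hc
  · have hD : ∀ t ∈ Icc (-1 : ℝ) 1, r ^ 2 ≤ 1 + ‖x + t • h‖ ^ 2 := by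
      intro t ht
      have e1 : ‖x‖ ≤ ‖x + t • h‖ + r := by
        calc ‖x‖ = ‖(x + t • h) - t • h‖ := by rw [add_sub_cancel_right]
          _ ≤ ‖x + t • h‖ + ‖t • h‖ := norm_sub_le _ _
          _ ≤ ‖x + t • h‖ + 1 * r := by
              rw [norm_smul, Real.norm_eq_abs]
              gcongr
              exact abs_le.2 ht
          _ = _ := by ring
      have e2 : ‖x‖ ^ 2 ≤ (‖x + t • h‖ + r) ^ 2 := by gcongr
      nlinarith [sq_nonneg (‖x + t • h‖ - r)]
    have sd := radial_second_diff G G₁ G₂ K (k / 2) (by positivity) hK h1 h2 b1 b2 x h (r ^ 2)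
      (by positivity) hD
    rw [← huG, ← huG, ← huG, hr2k, hrk] at sd
    have hmin : ‖h‖ ^ 2 / r ^ 2 ≤ 4 * min (‖h‖ ^ 2) 1 := by
      rw [div_le_iff₀ (by positivity)]
      have : ‖h‖ ^ 2 ≤ r ^ 2 := by gcongr
      rcases le_total (‖h‖ ^ 2) 1 with hh | hh
      · rw [min_eq_left hh]; nlinarith [sq_nonneg ‖h‖]
      · rw [min_eq_right hh]; linarith
    calc _ ≤ 12 * K * (2 ^ k * fracEta N s x / r ^ 2) * ‖h‖ ^ 2 * ‖h‖ ^ (-k) := by gcongr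
      _ = 12 * K * (2 ^ k * fracEta N s x) * (‖h‖ ^ 2 / r ^ 2) * ‖h‖ ^ (-k) := by ring
      _ ≤ 12 * K * (2 ^ k * fracEta N s x) * (4 * min (‖h‖ ^ 2) 1) * ‖h‖ ^ (-k) := by gcongr
      _ = 48 * K * 2 ^ k * fracEta N s x * levyW N s h := by simp only [levyW, ← hk]; ring
      _ ≤ _ := by
          gcongr
          linarith
  · have hWk : ‖h‖ ^ (-k) ≤ 4 * levyW N s h := by
      have : 1 / 4 ≤ min (‖h‖ ^ 2) 1 := by
        refine le_min (hr12.trans ?_) (by norm_num)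
        gcongr
      simp only [levyW, ← hk]
      nlinarith
    have hηk : ‖h‖ ^ (-k) ≤ 2 ^ k * fracEta N s x := by
      rw [← hrk]
      exact Real.rpow_le_rpow_of_nonpos hr0 hc (by linarith)
    have tri : |2 * u x - u (x + h) - u (x - h)| ≤
        2 * (K * fracEta N s x) + K * (fracEta N s (x + h) + fracEta N s (x - h)) := by
      have t1 := abs_le.1 (b0 x)
      have t2 := abs_le.1 (b0 (x + h))
      have t3 := abs_le.1 (b0 (x - h))
      rw [abs_le]
      constructor <;> linarith [t1.1, t1.2, t2.1, t2.2, t3.1, t3.2]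
    calc _ ≤ (2 * (K * fracEta N s x) + K * (fracEta N s (x + h) + fracEta N s (x - h))) *
          ‖h‖ ^ (-k) := by gcongr
      _ = 2 * (K * fracEta N s x) * ‖h‖ ^ (-k) +
          K * (fracEta N s (x + h) + fracEta N s (x - h)) * ‖h‖ ^ (-k) := by ring
      _ ≤ 2 * (K * fracEta N s x) * (4 * levyW N s h) +
          K * (fracEta N s (x + h) + fracEta N s (x - h)) * (2 ^ k * fracEta N s x) := by gcongr
      _ = 8 * K * 1 * fracEta N s x * levyW N s h +
          1 * K * 2 ^ k * fracEta N s x * (fracEta N s (x + h) + fracEta N s (x - h)) := by ring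
      _ ≤ 48 * K * 2 ^ k * fracEta N s x * levyW N s h +
          48 * K * 2 ^ k * fracEta N s x * (fracEta N s (x + h) + fracEta N s (x - h)) := by
          gcongr <;> norm_num
      _ = _ := by ring

/-- `|(-Δ)^s (η φ_R)(x)| ≤ C (1 + R^{-2s}) η(x)` for all `x` and
`R ≥ 1`, with `C` independent of `R`. -/
theorem fracLap_eta_cutoff_bound (N : ℕ) (hN : 1 ≤ N) (s : ℝ) (hs0 : 0 < s)
    (hs1 : s < 1) (φ : ℝ → ℝ) (hφ : ContDiff ℝ (⊤ : ℕ∞) φ) (hφc : HasCompactSupport φ)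
    (hφ1 : ∀ t : ℝ, |t| ≤ 1 → φ t = 1) (hφ0 : ∀ t : ℝ, 2 < |t| → φ t = 0) :
    ∃ C : ℝ, 0 < C ∧ ∀ R : ℝ, 1 ≤ R → ∀ x : ES N, ∃ v : ℝ,
      HasFracLapAt N s (fun y => fracEta N s y * φ (‖y‖ / R)) x v ∧
      |v| ≤ C * (1 + R ^ (-(2 * s))) * fracEta N s x := by
  obtain ⟨K, hK, hprof⟩ := radial_profile φ hφ hφ1 hφ0 (((N : ℝ) + 2 * s) / 2) (by positivity)
  set A : ℝ := 48 * K * 2 ^ ((N : ℝ) + 2 * s) with hA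
  have hA0 : 0 < A := by positivity
  set I : ℝ := (∫ h, levyW N s h) + 2 * ∫ h, fracEta N s h with hI
  have hI0 : 0 ≤ I := by
    have := integral_nonneg (μ := volume) (f := levyW N s) (levyW_nonneg N s)
    have := integral_nonneg (μ := volume) (f := fracEta N s) (fun h => (fracEta_pos N s h).le)
    positivity
  refine ⟨|fracC N s| * (A * I) + 1, by positivity, fun R hR x => ?_⟩
  obtain ⟨G, G₁, G₂, hG, h1, h2, b0, b1, b2⟩ := hprof R hR
  set u : ES N → ℝ := fun y => fracEta N s y * φ (‖y‖ / R) with hu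
  have huG : ∀ y, u y = G (‖y‖ ^ 2) := fun y => hG ‖y‖ (norm_nonneg y)
  have hub : ∀ y, |u y| ≤ K * fracEta N s y := by
    intro y
    rw [huG]
    exact b0 _ (by positivity)
  have huc : Continuous u := by
    have : Continuous (fracEta N s) := by
      unfold fracEta
      refine Continuous.rpow_const (by fun_prop) fun y => Or.inl (by positivity)
    have h3 := hφ.continuous
    exact this.mul (by fun_prop)
  have hη1 : ∀ y, fracEta N s y ≤ 1 := by
    intro y
    refine Real.rpow_le_one_of_one_le_of_nonpos (by nlinarith [sq_nonneg ‖y‖]) ?_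
    have : 0 ≤ ((N : ℝ) + 2 * s) / 2 := by positivity
    linarith
  have hbd := symm_quotient_bound N s hs0 u G G₁ G₂ K hK huG h1 h2 hub b1 b2 x
  have iη := integrable_fracEta N s hs0
  have iW := integrable_levyW N hN s hs0 hs1
  have ip : Integrable fun h => fracEta N s (x + h) := iη.comp_add_left x
  have im : Integrable fun h => fracEta N s (x - h) := iη.comp_sub_left x
  have isum : Integrable fun h => fracEta N s (x + h) + fracEta N s (x - h) := ip.add im
  have idom : Integrable fun h => A * fracEta N s x *
      (levyW N s h + (fracEta N s (x + h) + fracEta N s (x - h))) :=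
    (iW.add isum).const_mul _
  have hS : Integrable (fun h : ES N =>
      (2 * u x - u (x + h) - u (x - h)) / ‖h‖ ^ ((N : ℝ) + 2 * s)) := by
    refine idom.mono' ?_ (ae_of_all _ hbd)
    have hc : Continuous fun h => 2 * u x - u (x + h) - u (x - h) := by fun_prop
    exact (hc.measurable.div (measurable_norm.pow_const _)).aestronglyMeasurable
  refine ⟨_, hasFracLapAt_of_symm N hN s hs0 hs1 u huc K (fun y => (hub y).trans ?_) x hS, ?_⟩
  · nlinarith [hη1 y]
  have ηx := fracEta_pos N s x
  have hint : |∫ h : ES N, (2 * u x - u (x + h) - u (x - h)) / ‖h‖ ^ ((N : ℝ) + 2 * s)| ≤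
      A * fracEta N s x * I := by
    rw [← Real.norm_eq_abs]
    refine (norm_integral_le_of_norm_le idom (ae_of_all _ hbd)).trans (le_of_eq ?_)
    rw [integral_const_mul, integral_add iW isum, integral_add ip im,
      integral_add_left_eq_self (fracEta N s) x, integral_sub_left_eq_self (fracEta N s) volume x,
      hI]
    ring
  have hR0 : 0 ≤ R ^ (-(2 * s)) := Real.rpow_nonneg (by linarith) _
  rw [abs_mul, abs_mul, abs_of_pos (by norm_num : (0 : ℝ) < 1 / 2)]
  calc |fracC N s| * (1 / 2 * |∫ h : ES N,
        (2 * u x - u (x + h) - u (x - h)) / ‖h‖ ^ ((N : ℝ) + 2 * s)|)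
      ≤ |fracC N s| * (1 * (A * fracEta N s x * I)) := by gcongr; norm_num
    _ = (|fracC N s| * (A * I)) * 1 * fracEta N s x := by ring
    _ ≤ _ := by
        gcongr
        · linarith
        · linarith
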